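/- Let α, β ≥ -1/2, let W ≥ 1, s ≥ 0 and 1 ≤ p ≤ ∞ be fixed, and define Υ_s(t,θ,φ) := ∫∫_{[-1,1]²} (t² + q(θ,φ,u,v))^{-(α+β+3/2 + W/(2p) + s/2)} dΠ_α(u) dΠ_β(v) for t ∈ (0,1), θ, φ ∈ [0,π] (with the convention W/(2p) = 0 when p = ∞). Then there exists a constant C (depending only on α, β, W, s, p) such that for all θ ≠ φ in [0,π]: ‖1 + Υ_s(·,θ,φ)‖_{L^p((0,1), t^{W−1}dt)} ≤ C |θ−φ|^{-s} / μ_{α,β}(B(θ,|θ−φ|)). -/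

import Mathlib

open MeasureTheory Real Set
open scoped ENNReal Classical

noncomputable def cab (α β : ℝ) : ℝ :=
  Real.Gamma (α + β + 2) / (2 ^ (α + β + 1) * Real.Gamma (α + 1) * Real.Gamma (β + 1))

noncomputable def F4 (a₁ a₂ b₁ b₂ x y : ℝ) : ℝ :=
  ∑' p : ℕ × ℕ,
    (Polynomial.eval a₁ (ascPochhammer ℝ (p.1 + p.2)) *
      Polynomial.eval a₂ (ascPochhammer ℝ (p.1 + p.2))) /
    (Polynomial.eval b₁ (ascPochhammer ℝ p.1) * Polynomial.eval b₂ (ascPochhammer ℝ p.2) *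
      (Nat.factorial p.1) * (Nat.factorial p.2)) * x ^ p.1 * y ^ p.2

noncomputable def Hker (α β t θ φ : ℝ) : ℝ :=
  cab α β * Real.sinh (t / 2) / Real.cosh (t / 2) ^ (α + β + 2) *
    F4 ((α + β + 2) / 2) ((α + β + 3) / 2) (α + 1) (β + 1)
      ((Real.sin (θ / 2) * Real.sin (φ / 2) / Real.cosh (t / 2)) ^ 2)
      ((Real.cos (θ / 2) * Real.cos (φ / 2) / Real.cosh (t / 2)) ^ 2)

noncomputable def qf (θ φ u v : ℝ) : ℝ :=
  1 - u * Real.sin (θ / 2) * Real.sin (φ / 2) - v * Real.cos (θ / 2) * Real.cos (φ / 2)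

noncomputable def Psi (α β t θ φ u v : ℝ) : ℝ :=
  cab α β * Real.sinh (t / 2) / (Real.cosh (t / 2) - 1 + qf θ φ u v) ^ (α + β + 2)

noncomputable def PsiE (α β t θ φ u v : ℝ) : ℝ :=
  (Psi α β t θ φ u v + Psi α β t θ φ (-u) v + Psi α β t θ φ u (-v) +
    Psi α β t θ φ (-u) (-v)) / 4

noncomputable def PiMeas (ν : ℝ) : Measure ℝ :=
  if ν = -(1/2) then (2⁻¹ : ℝ≥0∞) • (Measure.dirac (-1) + Measure.dirac 1)
  else (volume.restrict (Icc (-1 : ℝ) 1)).withDensity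
    (fun u => ENNReal.ofReal
      (Real.Gamma (ν + 1) / (Real.sqrt π * Real.Gamma (ν + 1/2)) * (1 - u ^ 2) ^ (ν - 1/2)))

noncomputable def PiFun (γ u : ℝ) : ℝ :=
  Real.Gamma (γ + 1) / (Real.sqrt π * Real.Gamma (γ + 1/2)) *
    ∫ w in (0 : ℝ)..u, (1 - w ^ 2) ^ (γ - 1/2)

noncomputable def PiInt (ν : ℝ) (S : Set ℝ) (f : ℝ → ℝ) : ℝ :=
  if ν = -(1/2) then
    ((if (-1 : ℝ) ∈ S then f (-1) else 0) + (if (1 : ℝ) ∈ S then f 1 else 0)) / 2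
  else ∫ u in S, f u *
    (Real.Gamma (ν + 1) / (Real.sqrt π * Real.Gamma (ν + 1/2)) * (1 - u ^ 2) ^ (ν - 1/2))

noncomputable def muab (α β : ℝ) : Measure ℝ :=
  (volume.restrict (Icc (0 : ℝ) π)).withDensity
    (fun θ => ENNReal.ofReal (Real.sin (θ / 2) ^ (2 * α + 1) * Real.cos (θ / 2) ^ (2 * β + 1)))

def ballI (θ r : ℝ) : Set ℝ := Ioo (θ - r) (θ + r) ∩ Icc 0 π

/-! The point is that `q(θ,φ,u,v)` dominates, up to a constant, `D² + (1 - u) X + (1 - v) Y` with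
`D = |θ - φ|`, `X = sin (θ/2) sin (φ/2)` and `Y = cos (θ/2) cos (φ/2)`. Integrating a negative power
of `t² + D² + (1 - u) X + (1 - v) Y` against `Π_α`, and then against `Π_β`, trades the powers
`α + 1/2` and `β + 1/2` of `t² + D²` for the same powers of `t² + D² + X` and `t² + D² + Y`. At
`t = 0` the traded factors make up `μ(B(θ,D)) / D`, by the Lipschitz bound for `sin` and `cos`. What
remains is `(t + D) ^ (-(1 + s + W/p))`, whose norm in `L^p(t^{W-1} dt)` is of order
`D ^ (-(1 + s))` by scaling. -/

lemma lintegral_Ioc_rpow_sub_one {A r : ℝ} (hA : 0 < A) (hr : 0 ≤ r) :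
    ∫⁻ x in Ioc 0 r, ENNReal.ofReal (x ^ (A - 1)) = ENNReal.ofReal (r ^ A / A) := by
  have hint : IntegrableOn (fun x : ℝ => x ^ (A - 1)) (Ioc 0 r) :=
    (intervalIntegrable_iff_integrableOn_Ioc_of_le hr).1
      (intervalIntegral.intervalIntegrable_rpow' (by linarith))
  rw [← ofReal_integral_eq_lintegral_ofReal hint, ← intervalIntegral.integral_of_le hr,
    integral_rpow (Or.inl (by linarith)), sub_add_cancel, zero_rpow hA.ne', sub_zero]
  filter_upwards [ae_restrict_mem measurableSet_Ioc] with x hx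
  exact rpow_nonneg hx.1.le _

lemma lintegral_Ioi_rpow_neg_sub_one {κ r : ℝ} (hκ : 0 < κ) (hr : 0 < r) :
    ∫⁻ x in Ioi r, ENNReal.ofReal (x ^ (-κ - 1)) = ENNReal.ofReal (r ^ (-κ) / κ) := by
  rw [← ofReal_integral_eq_lintegral_ofReal (integrableOn_Ioi_rpow_of_lt (by linarith) hr),
    integral_Ioi_rpow_of_lt (by linarith) hr, sub_add_cancel, neg_div_neg_eq]
  filter_upwards [ae_restrict_mem measurableSet_Ioi] with x hx
  exact rpow_nonneg (hr.trans hx).le _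

lemma lintegral_Ioc_rpow_mul_add_mul_rpow_neg_le {A σ E X r : ℝ} (hA : 0 < A) (hσ : 0 ≤ σ)
    (hE : 0 < E) (hX : 0 ≤ X) (hr : 0 ≤ r) :
    ∫⁻ x in Ioc 0 r, ENNReal.ofReal (x ^ (A - 1)) * ENNReal.ofReal ((E + x * X) ^ (-σ))
      ≤ ENNReal.ofReal (r ^ A / A * E ^ (-σ)) := by
  calc _ ≤ ∫⁻ x in Ioc 0 r, ENNReal.ofReal (x ^ (A - 1)) * ENNReal.ofReal (E ^ (-σ)) := by
        refine setLIntegral_mono' measurableSet_Ioc fun x hx => ?_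
        gcongr _ * ENNReal.ofReal ?_
        exact rpow_le_rpow_of_nonpos hE (by nlinarith [hx.1]) (by linarith)
    _ = _ := by
        rw [lintegral_mul_const' _ _ ENNReal.ofReal_ne_top, lintegral_Ioc_rpow_sub_one hA hr,
          ← ENNReal.ofReal_mul (by positivity)]

lemma lintegral_Ioi_rpow_mul_add_mul_rpow_neg_le {A κ E X r : ℝ} (hκ : 0 < κ) (hAκ : 0 ≤ A + κ)
    (hE : 0 ≤ E) (hX : 0 < X) (hr : 0 < r) :
    ∫⁻ x in Ioi r, ENNReal.ofReal (x ^ (A - 1)) * ENNReal.ofReal ((E + x * X) ^ (-(A + κ)))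
      ≤ ENNReal.ofReal (r ^ (-κ) / κ * X ^ (-(A + κ))) := by
  calc _ ≤ ∫⁻ x in Ioi r, ENNReal.ofReal (x ^ (-κ - 1)) * ENNReal.ofReal (X ^ (-(A + κ))) := by
        refine setLIntegral_mono' measurableSet_Ioi fun x hx => ?_
        have hx0 : 0 < x := hr.trans hx
        rw [← ENNReal.ofReal_mul (by positivity), ← ENNReal.ofReal_mul (by positivity)]
        refine ENNReal.ofReal_le_ofReal ?_
        calc x ^ (A - 1) * (E + x * X) ^ (-(A + κ)) ≤ x ^ (A - 1) * (x * X) ^ (-(A + κ)) := by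
              gcongr ?_ * ?_
              exact rpow_le_rpow_of_nonpos (by positivity) (by linarith) (by linarith)
          _ = x ^ (-κ - 1) * X ^ (-(A + κ)) := by
              rw [mul_rpow hx0.le hX.le, ← mul_assoc, ← rpow_add hx0]
              ring_nf
    _ = _ := by
        rw [lintegral_mul_const' _ _ ENNReal.ofReal_ne_top, lintegral_Ioi_rpow_neg_sub_one hκ hr,
          ← ENNReal.ofReal_mul (by positivity)]

lemma lintegral_Ioi_zero_rpow_mul_add_mul_rpow_neg_le {A κ E X : ℝ} (hA : 0 < A) (hκ : 0 < κ)
    (hE : 0 < E) (hX : 0 < X) :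
    ∫⁻ x in Ioi 0, ENNReal.ofReal (x ^ (A - 1)) * ENNReal.ofReal ((E + x * X) ^ (-(A + κ)))
      ≤ ENNReal.ofReal ((1 / A + 1 / κ) * E ^ (-κ) * X ^ (-A)) := by
  have hr : 0 < E / X := div_pos hE hX
  have near : (E / X) ^ A / A * E ^ (-(A + κ)) = 1 / A * E ^ (-κ) * X ^ (-A) := by
    rw [div_rpow hE.le hX.le, neg_add, rpow_add hE, rpow_neg hX.le, rpow_neg hE.le A]
    field_simp
  have far : (E / X) ^ (-κ) / κ * X ^ (-(A + κ)) = 1 / κ * E ^ (-κ) * X ^ (-A) := by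
    rw [div_rpow hE.le hX.le, neg_add, rpow_add hX]
    field_simp
  rw [← Ioc_union_Ioi_eq_Ioi hr.le]
  calc _ ≤ ENNReal.ofReal ((E / X) ^ A / A * E ^ (-(A + κ))) +
          ENNReal.ofReal ((E / X) ^ (-κ) / κ * X ^ (-(A + κ))) :=
        (lintegral_union_le _ _ _).trans <| add_le_add
          (lintegral_Ioc_rpow_mul_add_mul_rpow_neg_le hA (by positivity) hE hX.le hr.le)
          (lintegral_Ioi_rpow_mul_add_mul_rpow_neg_le hκ (by positivity) hE.le hX hr)
    _ = _ := by
        rw [← ENNReal.ofReal_add (by positivity) (by positivity), near, far]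
        ring_nf

lemma one_sub_sq_rpow_sub_one_le {A u : ℝ} (hA : 0 ≤ A) (hu₀ : 0 ≤ u) (hu₁ : u ≤ 1) :
    (1 - u ^ 2) ^ (A - 1) ≤ 2 ^ A * (1 - u) ^ (A - 1) := by
  have hfactor : 1 - u ^ 2 = (1 + u) * (1 - u) := by ring
  rw [hfactor, mul_rpow (by linarith) (by linarith)]
  refine mul_le_mul_of_nonneg_right ?_ (rpow_nonneg (by linarith) _)
  calc (1 + u) ^ (A - 1) ≤ (1 + u) ^ A := rpow_le_rpow_of_exponent_le (by linarith) (by linarith)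
    _ ≤ 2 ^ A := rpow_le_rpow (by linarith) (by linarith) hA

lemma lintegral_one_sub_sq_rpow_mul_le {A : ℝ} (hA : 0 ≤ A) {f : ℝ → ℝ≥0∞}
    (hf : AntitoneOn f (Ioi 0)) (hfm : Measurable f) :
    ∫⁻ u in Ioo (-1) 1, ENNReal.ofReal ((1 - u ^ 2) ^ (A - 1)) * f (1 - u)
      ≤ 2 * ENNReal.ofReal (2 ^ A) * ∫⁻ x in Ioi 0, ENNReal.ofReal (x ^ (A - 1)) * f x := by
  set g : ℝ → ℝ≥0∞ := (Ioi 0).indicator fun x => ENNReal.ofReal (x ^ (A - 1)) * f x with hg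
  have hgm : Measurable g := Measurable.indicator (by fun_prop) measurableSet_Ioi
  have weight : ∀ u : ℝ, 0 ≤ u → u ≤ 1 → ENNReal.ofReal ((1 - u ^ 2) ^ (A - 1)) ≤
      ENNReal.ofReal (2 ^ A) * ENNReal.ofReal ((1 - u) ^ (A - 1)) := fun u hu₀ hu₁ => by
    rw [← ENNReal.ofReal_mul (by positivity)]
    exact ENNReal.ofReal_le_ofReal (one_sub_sq_rpow_sub_one_le hA hu₀ hu₁)
  have pointwise : ∀ u ∈ Ioo (-1 : ℝ) 1, ENNReal.ofReal ((1 - u ^ 2) ^ (A - 1)) * f (1 - u) ≤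
      ENNReal.ofReal (2 ^ A) * (g (1 - u) + g (1 + u)) := by
    rintro u ⟨hu₀, hu₁⟩
    have hsub : 1 - u ∈ Ioi (0 : ℝ) := sub_pos.2 hu₁
    have hadd : 1 + u ∈ Ioi (0 : ℝ) := neg_lt_iff_pos_add'.1 hu₀
    rw [hg, indicator_of_mem hsub, indicator_of_mem hadd, mul_add, ← mul_assoc, ← mul_assoc]
    rcases le_total 0 u with hu | hu
    · exact le_add_right (mul_le_mul_left (weight u hu hu₁.le) _)
    · refine le_add_left (mul_le_mul' ?_ (hf hadd hsub (by linarith)))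
      simpa only [neg_sq, sub_neg_eq_add] using weight (-u) (by linarith) (by linarith)
  calc _ ≤ ∫⁻ u in Ioo (-1) 1, ENNReal.ofReal (2 ^ A) * (g (1 - u) + g (1 + u)) :=
        setLIntegral_mono' measurableSet_Ioo pointwise
    _ ≤ ∫⁻ u, ENNReal.ofReal (2 ^ A) * (g (1 - u) + g (1 + u)) := setLIntegral_le_lintegral _ _
    _ = ENNReal.ofReal (2 ^ A) * ((∫⁻ u, g (1 - u)) + ∫⁻ u, g (1 + u)) := by
        rw [lintegral_const_mul' _ _ ENNReal.ofReal_ne_top, lintegral_add_left (by fun_prop)]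
    _ = 2 * ENNReal.ofReal (2 ^ A) * ∫⁻ x, g x := by
        rw [lintegral_sub_left_eq_self g, lintegral_add_left_eq_self g]
        ring
    _ = _ := by rw [hg, lintegral_indicator measurableSet_Ioi]

lemma ae_PiMeas_mem_Icc (ν : ℝ) : ∀ᵐ u ∂PiMeas ν, u ∈ Icc (-1 : ℝ) 1 := by
  unfold PiMeas
  split_ifs
  · have atPoint : ∀ x ∈ Icc (-1 : ℝ) 1, ∀ᵐ u ∂Measure.dirac x, u ∈ Icc (-1 : ℝ) 1 :=
      fun x hx => (ae_dirac_iff measurableSet_Icc).2 hx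
    rw [Measure.ae_ennreal_smul_measure_iff (by simp), ae_add_measure_iff]
    exact ⟨atPoint _ (by norm_num), atPoint _ (by norm_num)⟩
  · exact (withDensity_absolutelyContinuous _ _).ae_le (ae_restrict_mem measurableSet_Icc)

lemma lintegral_PiMeas_neg_half_rpow_le {κ E X : ℝ} (hκ : 0 ≤ κ) (hE : 0 < E) (hX : 0 ≤ X) :
    ∫⁻ u, ENNReal.ofReal ((E + (1 - u) * X) ^ (-κ)) ∂PiMeas (-(1 / 2))
      ≤ ENNReal.ofReal (E ^ (-κ)) := by
  have atNegOne : (E + (1 - -1) * X) ^ (-κ) ≤ E ^ (-κ) :=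
    rpow_le_rpow_of_nonpos hE (by linarith) (by linarith)
  rw [PiMeas, if_pos rfl, lintegral_smul_measure, lintegral_add_measure, lintegral_dirac,
    lintegral_dirac, sub_self, zero_mul, add_zero, smul_eq_mul]
  calc _ ≤ 2⁻¹ * (ENNReal.ofReal (E ^ (-κ)) + ENNReal.ofReal (E ^ (-κ))) := by gcongr
    _ = _ := by
        rw [← two_mul, ← mul_assoc, ENNReal.inv_mul_cancel two_ne_zero ENNReal.ofNat_ne_top,
          one_mul]

lemma lintegral_PiMeas_comp_one_sub_le {ν : ℝ} (hν : -(1 / 2) < ν) :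
    ∃ C : ℝ, 0 < C ∧ ∀ f : ℝ → ℝ≥0∞, AntitoneOn f (Ioi 0) → Measurable f →
      ∫⁻ u, f (1 - u) ∂PiMeas ν ≤
        ENNReal.ofReal C * ∫⁻ x in Ioi 0, ENNReal.ofReal (x ^ (ν + 1 / 2 - 1)) * f x := by
  set c : ℝ := Real.Gamma (ν + 1) / (Real.sqrt π * Real.Gamma (ν + 1 / 2))
  have hc : 0 < c := by
    have := Real.Gamma_pos_of_pos (show 0 < ν + 1 by linarith)
    have := Real.Gamma_pos_of_pos (show 0 < ν + 1 / 2 by linarith)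
    positivity
  refine ⟨c * (2 * 2 ^ (ν + 1 / 2)), by positivity, fun f hf hfm => ?_⟩
  have hexp : ν - 1 / 2 = ν + 1 / 2 - 1 := by ring
  rw [PiMeas, if_neg hν.ne', hexp]
  calc _ ≤ ∫⁻ u in Icc (-1) 1, ENNReal.ofReal (c * (1 - u ^ 2) ^ (ν + 1 / 2 - 1)) * f (1 - u) :=
        lintegral_withDensity_le_lintegral_mul _ (by fun_prop) _
    _ = ENNReal.ofReal c *
          ∫⁻ u in Ioo (-1) 1, ENNReal.ofReal ((1 - u ^ 2) ^ (ν + 1 / 2 - 1)) * f (1 - u) := by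
        simp_rw [ENNReal.ofReal_mul hc.le, mul_assoc]
        rw [lintegral_const_mul' _ _ ENNReal.ofReal_ne_top, restrict_Ioo_eq_restrict_Icc]
    _ ≤ ENNReal.ofReal c * (2 * ENNReal.ofReal (2 ^ (ν + 1 / 2)) *
          ∫⁻ x in Ioi 0, ENNReal.ofReal (x ^ (ν + 1 / 2 - 1)) * f x) := by
        gcongr
        exact lintegral_one_sub_sq_rpow_mul_le (by linarith) hf hfm
    _ = _ := by
        rw [ENNReal.ofReal_mul hc.le, ENNReal.ofReal_mul two_pos.le, ENNReal.ofReal_ofNat,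
          ← mul_assoc]

-- Trades `X`, which may vanish, for the positive `E + X`.
lemma add_mul_rpow_neg_le {σ E X x : ℝ} (hσ : 0 ≤ σ) (hE : 0 < E) (hX : 0 ≤ X) (hx₀ : 0 ≤ x)
    (hx₂ : x ≤ 2) : (E + x * X) ^ (-σ) ≤ 3 ^ σ * (E + x * (E + X)) ^ (-σ) := by
  calc (E + x * X) ^ (-σ) ≤ ((E + x * (E + X)) / 3) ^ (-σ) :=
        rpow_le_rpow_of_nonpos (by positivity) (by nlinarith [mul_nonneg hx₀ hX]) (by linarith)
    _ = _ := by
        rw [div_rpow (by positivity) (by positivity), rpow_neg (by positivity : (0 : ℝ) ≤ 3),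
          div_inv_eq_mul, mul_comm]

lemma lintegral_PiMeas_rpow_le {ν κ : ℝ} (hν : -(1 / 2) ≤ ν) (hκ : 0 < κ) :
    ∃ C : ℝ, 0 < C ∧ ∀ E X : ℝ, 0 < E → 0 ≤ X →
      ∫⁻ u, ENNReal.ofReal ((E + (1 - u) * X) ^ (-(ν + 1 / 2 + κ))) ∂PiMeas ν
        ≤ ENNReal.ofReal (C * E ^ (-κ) * (E + X) ^ (-(ν + 1 / 2))) := by
  rcases hν.eq_or_lt with rfl | hν
  · refine ⟨1, one_pos, fun E X hE hX => ?_⟩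
    simpa using lintegral_PiMeas_neg_half_rpow_le hκ.le hE hX
  have hA : 0 < ν + 1 / 2 := by linarith
  set A := ν + 1 / 2
  obtain ⟨C, hC, hPi⟩ := lintegral_PiMeas_comp_one_sub_le hν
  refine ⟨3 ^ (A + κ) * C * (1 / A + 1 / κ), by positivity, fun E X hE hX => ?_⟩
  set f : ℝ → ℝ≥0∞ := fun x => ENNReal.ofReal ((E + x * (E + X)) ^ (-(A + κ))) with hf
  have hanti : AntitoneOn f (Ioi 0) := fun x (hx : 0 < x) y _ hxy =>
    ENNReal.ofReal_le_ofReal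
      (rpow_le_rpow_of_nonpos (by positivity) (by gcongr) (by linarith))
  have hcompare : ∀ u ∈ Icc (-1 : ℝ) 1, ENNReal.ofReal ((E + (1 - u) * X) ^ (-(A + κ))) ≤
      ENNReal.ofReal (3 ^ (A + κ)) * f (1 - u) := by
    rintro u ⟨hu₀, hu₁⟩
    rw [hf, ← ENNReal.ofReal_mul (by positivity)]
    exact ENNReal.ofReal_le_ofReal
      (add_mul_rpow_neg_le (by positivity) hE hX (by linarith) (by linarith))
  calc _ ≤ ∫⁻ u, ENNReal.ofReal (3 ^ (A + κ)) * f (1 - u) ∂PiMeas ν :=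
        lintegral_mono_ae ((ae_PiMeas_mem_Icc ν).mono hcompare)
    _ ≤ ENNReal.ofReal (3 ^ (A + κ)) * (ENNReal.ofReal C *
          ENNReal.ofReal ((1 / A + 1 / κ) * E ^ (-κ) * (E + X) ^ (-A))) := by
        rw [lintegral_const_mul' _ _ ENNReal.ofReal_ne_top]
        gcongr
        refine (hPi f hanti (by fun_prop)).trans ?_
        gcongr
        exact lintegral_Ioi_zero_rpow_mul_add_mul_rpow_neg_le hA hκ hE (by positivity)
    _ = _ := by
        rw [← ENNReal.ofReal_mul hC.le, ← ENNReal.ofReal_mul (by positivity)]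
        ring_nf

lemma lintegral_PiMeas_PiMeas_rpow_le {α β κ : ℝ} (hα : -(1 / 2) ≤ α) (hβ : -(1 / 2) ≤ β)
    (hκ : 0 < κ) :
    ∃ C : ℝ, 0 < C ∧ ∀ E X Y : ℝ, 0 < E → 0 ≤ X → 0 ≤ Y →
      ∫⁻ v, ∫⁻ u, ENNReal.ofReal ((E + (1 - u) * X + (1 - v) * Y) ^ (-(α + β + 1 + κ)))
          ∂PiMeas α ∂PiMeas β
        ≤ ENNReal.ofReal
            (C * E ^ (-κ) * (E + X) ^ (-(α + 1 / 2)) * (E + Y) ^ (-(β + 1 / 2))) := by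
  obtain ⟨C₁, hC₁, inner⟩ := lintegral_PiMeas_rpow_le hα (show 0 < β + 1 / 2 + κ by linarith)
  obtain ⟨C₂, hC₂, outer⟩ := lintegral_PiMeas_rpow_le hβ hκ
  have hexp : α + β + 1 + κ = α + 1 / 2 + (β + 1 / 2 + κ) := by ring
  refine ⟨C₁ * C₂, by positivity, fun E X Y hE hX hY => ?_⟩
  have hinner : ∀ v ∈ Icc (-1 : ℝ) 1,
      ∫⁻ u, ENNReal.ofReal ((E + (1 - u) * X + (1 - v) * Y) ^ (-(α + β + 1 + κ))) ∂PiMeas α ≤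
        ENNReal.ofReal (C₁ * (E + X) ^ (-(α + 1 / 2))) *
          ENNReal.ofReal ((E + (1 - v) * Y) ^ (-(β + 1 / 2 + κ))) := fun v hv => by
    have hvY : 0 ≤ (1 - v) * Y := mul_nonneg (sub_nonneg.2 hv.2) hY
    have hdrop : (E + (1 - v) * Y + X) ^ (-(α + 1 / 2)) ≤ (E + X) ^ (-(α + 1 / 2)) :=
      rpow_le_rpow_of_nonpos (by positivity) (by linarith) (by linarith)
    simp_rw [add_right_comm E, hexp]
    refine (inner _ X (by positivity) hX).trans ?_
    rw [← ENNReal.ofReal_mul (by positivity), mul_right_comm]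
    gcongr
  calc _ ≤ ∫⁻ v, ENNReal.ofReal (C₁ * (E + X) ^ (-(α + 1 / 2))) *
          ENNReal.ofReal ((E + (1 - v) * Y) ^ (-(β + 1 / 2 + κ))) ∂PiMeas β :=
        lintegral_mono_ae ((ae_PiMeas_mem_Icc β).mono hinner)
    _ ≤ ENNReal.ofReal (C₁ * (E + X) ^ (-(α + 1 / 2))) *
          ENNReal.ofReal (C₂ * E ^ (-κ) * (E + Y) ^ (-(β + 1 / 2))) := by
        rw [lintegral_const_mul' _ _ ENNReal.ofReal_ne_top]
        gcongr
        exact outer E Y hE hY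
    _ = _ := by
        rw [← ENNReal.ofReal_mul (by positivity)]
        ring_nf

lemma sin_half_mem_Icc {x : ℝ} (hx : x ∈ Icc (0 : ℝ) π) : sin (x / 2) ∈ Icc (0 : ℝ) 1 :=
  ⟨sin_nonneg_of_nonneg_of_le_pi (by linarith [hx.1]) (by linarith [hx.1, hx.2]), sin_le_one _⟩

lemma cos_half_mem_Icc {x : ℝ} (hx : x ∈ Icc (0 : ℝ) π) : cos (x / 2) ∈ Icc (0 : ℝ) 1 :=
  ⟨cos_nonneg_of_neg_pi_div_two_le_of_le (by linarith [hx.1, pi_pos]) (by linarith [hx.2]),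
    cos_le_one _⟩

lemma abs_sub_le_pi {θ φ : ℝ} (hθ : θ ∈ Icc (0 : ℝ) π) (hφ : φ ∈ Icc (0 : ℝ) π) :
    |θ - φ| ≤ π := by
  simpa only [Real.dist_eq, sub_zero] using Real.dist_le_of_mem_Icc hθ hφ

lemma sq_sub_le_pi_sq {θ φ : ℝ} (hθ : θ ∈ Icc (0 : ℝ) π) (hφ : φ ∈ Icc (0 : ℝ) π) :
    (θ - φ) ^ 2 ≤ π ^ 2 :=
  sq_le_sq' (neg_le_of_abs_le (abs_sub_le_pi hθ hφ)) (le_of_abs_le (abs_sub_le_pi hθ hφ))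

lemma qf_eq (θ φ u v : ℝ) :
    qf θ φ u v = (1 - cos ((θ - φ) / 2)) + (1 - u) * (sin (θ / 2) * sin (φ / 2)) +
      (1 - v) * (cos (θ / 2) * cos (φ / 2)) := by
  rw [qf, sub_div, cos_sub]
  ring

lemma le_qf {θ φ u v : ℝ} (hθ : θ ∈ Icc (0 : ℝ) π) (hφ : φ ∈ Icc (0 : ℝ) π) (hu : u ≤ 1)
    (hv : v ≤ 1) :
    ((θ - φ) ^ 2 + (1 - u) * (sin (θ / 2) * sin (φ / 2)) +
      (1 - v) * (cos (θ / 2) * cos (φ / 2))) / (2 * π ^ 2) ≤ qf θ φ u v := by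
  have hu₀ := mul_nonneg (sub_nonneg.2 hu)
    (mul_nonneg (sin_half_mem_Icc hθ).1 (sin_half_mem_Icc hφ).1)
  have hv₀ := mul_nonneg (sub_nonneg.2 hv)
    (mul_nonneg (cos_half_mem_Icc hθ).1 (cos_half_mem_Icc hφ).1)
  have hdiff : |(θ - φ) / 2| ≤ π := by
    rw [abs_div, abs_two]
    linarith [abs_sub_le_pi hθ hφ, pi_pos]
  have hcos : (θ - φ) ^ 2 / (2 * π ^ 2) ≤ 1 - cos ((θ - φ) / 2) := by
    refine le_sub_comm.1 ((cos_le_one_sub_mul_cos_sq hdiff).trans_eq ?_)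
    field_simp
  have hpi : 1 ≤ 2 * π ^ 2 := by nlinarith [two_le_pi]
  rw [qf_eq, add_div, add_div]
  exact add_le_add (add_le_add hcos (div_le_self hu₀ hpi)) (div_le_self hv₀ hpi)

/-- The size of `μ_{α,β}(B(θ, |θ - φ|)) / |θ - φ|` up to constants, written with the products of
sines and cosines that occur in `q`. -/
noncomputable def ballWeight (α β θ φ : ℝ) : ℝ :=
  ((θ - φ) ^ 2 + sin (θ / 2) * sin (φ / 2)) ^ (α + 1 / 2) *
    ((θ - φ) ^ 2 + cos (θ / 2) * cos (φ / 2)) ^ (β + 1 / 2)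

lemma ballWeight_pos (α β : ℝ) {θ φ : ℝ} (hθ : θ ∈ Icc (0 : ℝ) π) (hφ : φ ∈ Icc (0 : ℝ) π)
    (hne : θ ≠ φ) : 0 < ballWeight α β θ φ := by
  have hD : 0 < (θ - φ) ^ 2 := sq_pos_of_ne_zero (sub_ne_zero.2 hne)
  have hX := mul_nonneg (sin_half_mem_Icc hθ).1 (sin_half_mem_Icc hφ).1
  have hY := mul_nonneg (cos_half_mem_Icc hθ).1 (cos_half_mem_Icc hφ).1
  exact mul_pos (rpow_pos_of_pos (add_pos_of_pos_of_nonneg hD hX) _)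
    (rpow_pos_of_pos (add_pos_of_pos_of_nonneg hD hY) _)

lemma ballWeight_le {α β θ φ : ℝ} (hα : -(1 / 2) ≤ α) (hβ : -(1 / 2) ≤ β)
    (hθ : θ ∈ Icc (0 : ℝ) π) (hφ : φ ∈ Icc (0 : ℝ) π) :
    ballWeight α β θ φ ≤ (π ^ 2 + 1) ^ (α + β + 1) := by
  have hD := sq_sub_le_pi_sq hθ hφ
  have hX := unitInterval.mul_mem (sin_half_mem_Icc hθ) (sin_half_mem_Icc hφ)
  have hY := unitInterval.mul_mem (cos_half_mem_Icc hθ) (cos_half_mem_Icc hφ)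
  have hX₀ := hX.1
  have hY₀ := hY.1
  have hexp : α + β + 1 = (α + 1 / 2) + (β + 1 / 2) := by ring
  rw [hexp, rpow_add (by positivity)]
  exact mul_le_mul (rpow_le_rpow (by positivity) (add_le_add hD hX.2) (by linarith))
    (rpow_le_rpow (by positivity) (add_le_add hD hY.2) (by linarith))
    (by positivity) (by positivity)

lemma rpow_neg_mul_rpow_neg_le_inv_ballWeight {α β θ φ t : ℝ} (hα : -(1 / 2) ≤ α)
    (hβ : -(1 / 2) ≤ β) (hθ : θ ∈ Icc (0 : ℝ) π) (hφ : φ ∈ Icc (0 : ℝ) π) (hne : θ ≠ φ) :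
    (t ^ 2 + (θ - φ) ^ 2 + sin (θ / 2) * sin (φ / 2)) ^ (-(α + 1 / 2)) *
      (t ^ 2 + (θ - φ) ^ 2 + cos (θ / 2) * cos (φ / 2)) ^ (-(β + 1 / 2))
      ≤ (ballWeight α β θ φ)⁻¹ := by
  have : 0 < (θ - φ) ^ 2 := sq_pos_of_ne_zero (sub_ne_zero.2 hne)
  have hX := mul_nonneg (sin_half_mem_Icc hθ).1 (sin_half_mem_Icc hφ).1
  have hY := mul_nonneg (cos_half_mem_Icc hθ).1 (cos_half_mem_Icc hφ).1
  have ht := sq_nonneg t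
  rw [ballWeight, mul_inv, ← rpow_neg (by positivity), ← rpow_neg (by positivity)]
  exact mul_le_mul (rpow_le_rpow_of_nonpos (by positivity) (by linarith) (by linarith))
    (rpow_le_rpow_of_nonpos (by positivity) (by linarith) (by linarith))
    (by positivity) (by positivity)

lemma enorm_sq_add_qf_rpow_neg_le {γ θ φ u v : ℝ} (hγ : 0 ≤ γ) (hθ : θ ∈ Icc (0 : ℝ) π)
    (hφ : φ ∈ Icc (0 : ℝ) π) (hne : θ ≠ φ) (hu : u ≤ 1) (hv : v ≤ 1) (t : ℝ) :
    ‖(t ^ 2 + qf θ φ u v) ^ (-γ)‖ₑ ≤ ENNReal.ofReal ((2 * π ^ 2) ^ γ) *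
      ENNReal.ofReal ((t ^ 2 + (θ - φ) ^ 2 + (1 - u) * (sin (θ / 2) * sin (φ / 2)) +
        (1 - v) * (cos (θ / 2) * cos (φ / 2))) ^ (-γ)) := by
  have : 0 < (θ - φ) ^ 2 := sq_pos_of_ne_zero (sub_ne_zero.2 hne)
  have hX := mul_nonneg (sub_nonneg.2 hu)
    (mul_nonneg (sin_half_mem_Icc hθ).1 (sin_half_mem_Icc hφ).1)
  have hY := mul_nonneg (sub_nonneg.2 hv)
    (mul_nonneg (cos_half_mem_Icc hθ).1 (cos_half_mem_Icc hφ).1)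
  have hq := le_qf hθ hφ hu hv
  set X := (1 - u) * (sin (θ / 2) * sin (φ / 2))
  set Y := (1 - v) * (cos (θ / 2) * cos (φ / 2))
  have hlower : (t ^ 2 + (θ - φ) ^ 2 + X + Y) / (2 * π ^ 2) ≤ t ^ 2 + qf θ φ u v := by
    have ht : t ^ 2 / (2 * π ^ 2) ≤ t ^ 2 :=
      div_le_self (sq_nonneg t) (by nlinarith [two_le_pi])
    calc _ = t ^ 2 / (2 * π ^ 2) + ((θ - φ) ^ 2 + X + Y) / (2 * π ^ 2) := by ring
      _ ≤ _ := add_le_add ht hq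
  have hpos : 0 < (t ^ 2 + (θ - φ) ^ 2 + X + Y) / (2 * π ^ 2) := by positivity
  rw [Real.enorm_of_nonneg (rpow_nonneg (hpos.le.trans hlower) _),
    ← ENNReal.ofReal_mul (by positivity)]
  refine ENNReal.ofReal_le_ofReal
    ((rpow_le_rpow_of_nonpos hpos hlower (by linarith)).trans_eq ?_)
  rw [div_rpow (by positivity) (by positivity), rpow_neg (by positivity : 0 ≤ 2 * π ^ 2),
    div_inv_eq_mul, mul_comm]

/-- The double integral `Υ_s` with a free exponent: `Υ_s(t,θ,φ)` is
`upsilon α β (α + β + 3/2 + W/(2p) + s/2) t θ φ`. -/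
noncomputable def upsilon (α β γ t θ φ : ℝ) : ℝ :=
  ∫ v, (∫ u, (t ^ 2 + qf θ φ u v) ^ (-γ) ∂(PiMeas α)) ∂(PiMeas β)

lemma enorm_upsilon_le {α β κ : ℝ} (hα : -(1 / 2) ≤ α) (hβ : -(1 / 2) ≤ β) (hκ : 0 < κ) :
    ∃ C : ℝ, 0 < C ∧ ∀ θ ∈ Icc (0 : ℝ) π, ∀ φ ∈ Icc (0 : ℝ) π, θ ≠ φ → ∀ t : ℝ,
      ‖upsilon α β (α + β + 1 + κ) t θ φ‖ₑ
        ≤ ENNReal.ofReal (C * (t ^ 2 + (θ - φ) ^ 2) ^ (-κ) / ballWeight α β θ φ) := by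
  obtain ⟨C, hC, hdouble⟩ := lintegral_PiMeas_PiMeas_rpow_le hα hβ hκ
  have hγ : 0 ≤ α + β + 1 + κ := by linarith
  set γ := α + β + 1 + κ
  refine ⟨(2 * π ^ 2) ^ γ * C, by positivity, fun θ hθ φ hφ hne t => ?_⟩
  have : 0 < (θ - φ) ^ 2 := sq_pos_of_ne_zero (sub_ne_zero.2 hne)
  have hX := mul_nonneg (sin_half_mem_Icc hθ).1 (sin_half_mem_Icc hφ).1
  have hY := mul_nonneg (cos_half_mem_Icc hθ).1 (cos_half_mem_Icc hφ).1
  calc _ ≤ ∫⁻ v, ∫⁻ u, ‖(t ^ 2 + qf θ φ u v) ^ (-γ)‖ₑ ∂PiMeas α ∂PiMeas β :=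
        (enorm_integral_le_lintegral_enorm _).trans
          (lintegral_mono fun v => enorm_integral_le_lintegral_enorm _)
    _ ≤ ∫⁻ v, ∫⁻ u, ENNReal.ofReal ((2 * π ^ 2) ^ γ) *
          ENNReal.ofReal ((t ^ 2 + (θ - φ) ^ 2 + (1 - u) * (sin (θ / 2) * sin (φ / 2)) +
            (1 - v) * (cos (θ / 2) * cos (φ / 2))) ^ (-γ)) ∂PiMeas α ∂PiMeas β :=
        lintegral_mono_ae <| (ae_PiMeas_mem_Icc β).mono fun v hv =>
          lintegral_mono_ae <| (ae_PiMeas_mem_Icc α).mono fun u hu =>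
            enorm_sq_add_qf_rpow_neg_le hγ hθ hφ hne hu.2 hv.2 t
    _ ≤ ENNReal.ofReal ((2 * π ^ 2) ^ γ) * ENNReal.ofReal (C * (t ^ 2 + (θ - φ) ^ 2) ^ (-κ) *
          (t ^ 2 + (θ - φ) ^ 2 + sin (θ / 2) * sin (φ / 2)) ^ (-(α + 1 / 2)) *
          (t ^ 2 + (θ - φ) ^ 2 + cos (θ / 2) * cos (φ / 2)) ^ (-(β + 1 / 2))) := by
        simp_rw [lintegral_const_mul' _ _ ENNReal.ofReal_ne_top]
        gcongr
        exact hdouble _ _ _ (by positivity) hX hY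
    _ ≤ _ := by
        rw [← ENNReal.ofReal_mul (by positivity), mul_assoc (C * _), ← mul_assoc, ← mul_assoc _ C,
          div_eq_mul_inv (_ * _ ^ (-κ))]
        gcongr
        exact rpow_neg_mul_rpow_neg_le_inv_ballWeight hα hβ hθ hφ hne

lemma one_le_mul_div_ballWeight {α β κ θ φ t : ℝ} (hα : -(1 / 2) ≤ α) (hβ : -(1 / 2) ≤ β)
    (hκ : 0 ≤ κ) (hθ : θ ∈ Icc (0 : ℝ) π) (hφ : φ ∈ Icc (0 : ℝ) π) (hne : θ ≠ φ)
    (ht : t ^ 2 ≤ 1) :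
    1 ≤ (π ^ 2 + 1) ^ (α + β + 1 + κ) * (t ^ 2 + (θ - φ) ^ 2) ^ (-κ) / ballWeight α β θ φ := by
  have : 0 < (θ - φ) ^ 2 := sq_pos_of_ne_zero (sub_ne_zero.2 hne)
  have htD : t ^ 2 + (θ - φ) ^ 2 ≤ π ^ 2 + 1 := by linarith [sq_sub_le_pi_sq hθ hφ]
  have hE : 0 < t ^ 2 + (θ - φ) ^ 2 := by positivity
  rw [rpow_neg hE.le, ← div_eq_mul_inv, div_div,
    one_le_div (mul_pos (by positivity) (ballWeight_pos α β hθ hφ hne)), rpow_add (by positivity),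
    mul_comm]
  gcongr
  exact ballWeight_le hα hβ hθ hφ

lemma sq_add_sq_rpow_neg_le {t d κ : ℝ} (ht : 0 < t) (hd : 0 ≤ d) (hκ : 0 ≤ κ) :
    (t ^ 2 + d ^ 2) ^ (-κ) ≤ 2 ^ κ * (t + d) ^ (-(2 * κ)) := by
  calc (t ^ 2 + d ^ 2) ^ (-κ) ≤ ((t + d) ^ 2 / 2) ^ (-κ) :=
        rpow_le_rpow_of_nonpos (by positivity) (by nlinarith [sq_nonneg (t - d)]) (by linarith)
    _ = _ := by
        rw [div_rpow (by positivity) (by positivity), rpow_neg two_pos.le, div_inv_eq_mul, mul_comm,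
          ← rpow_two, ← rpow_mul (by positivity), mul_neg]

lemma enorm_one_add_upsilon_le {α β κ : ℝ} (hα : -(1 / 2) ≤ α) (hβ : -(1 / 2) ≤ β) (hκ : 0 < κ) :
    ∃ C : ℝ, 0 < C ∧ ∀ θ ∈ Icc (0 : ℝ) π, ∀ φ ∈ Icc (0 : ℝ) π, θ ≠ φ → ∀ t ∈ Ioo (0 : ℝ) 1,
      ‖1 + upsilon α β (α + β + 1 + κ) t θ φ‖ₑ
        ≤ ENNReal.ofReal (C / ballWeight α β θ φ * (t + |θ - φ|) ^ (-(2 * κ))) := by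
  obtain ⟨C, hC, hupsilon⟩ := enorm_upsilon_le hα hβ hκ
  set M : ℝ := (π ^ 2 + 1) ^ (α + β + 1 + κ)
  have : 0 < M := by positivity
  refine ⟨(M + C) * 2 ^ κ, by positivity, fun θ hθ φ hφ hne t ht => ?_⟩
  have hw := ballWeight_pos α β hθ hφ hne
  have hone := one_le_mul_div_ballWeight hα hβ hκ.le hθ hφ hne (pow_le_one₀ ht.1.le ht.2.le)
  have hE := sq_add_sq_rpow_neg_le ht.1 (abs_nonneg (θ - φ)) hκ.le
  rw [sq_abs] at hE
  set w := ballWeight α β θ φ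
  set e := (t ^ 2 + (θ - φ) ^ 2) ^ (-κ)
  calc _ ≤ ‖(1 : ℝ)‖ₑ + ‖upsilon α β (α + β + 1 + κ) t θ φ‖ₑ := enorm_add_le _ _
    _ ≤ ENNReal.ofReal (M * e / w) + ENNReal.ofReal (C * e / w) := by
        rw [enorm_one]
        exact add_le_add (ENNReal.one_le_ofReal.2 hone) (hupsilon θ hθ φ hφ hne t)
    _ = ENNReal.ofReal ((M + C) / w * e) := by
        rw [← ENNReal.ofReal_add (by positivity) (by positivity)]
        ring_nf
    _ ≤ ENNReal.ofReal ((M + C) / w * (2 ^ κ * (t + |θ - φ|) ^ (-(2 * κ)))) := by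
        gcongr
    _ = _ := by ring_nf

lemma eLpNorm_top_add_rpow_neg_le {μ : Measure ℝ} {a d : ℝ} (hμ : ∀ᵐ t ∂μ, 0 < t) (ha : 0 ≤ a)
    (hd : 0 < d) : eLpNorm (fun t : ℝ => (t + d) ^ (-a)) ∞ μ ≤ ENNReal.ofReal (d ^ (-a)) := by
  rw [eLpNorm_exponent_top]
  refine eLpNormEssSup_le_of_ae_bound ?_
  filter_upwards [hμ] with t ht
  rw [Real.norm_of_nonneg (by positivity)]
  exact rpow_le_rpow_of_nonpos hd (by linarith) (by linarith)

/-- The measure `t ^ (W - 1) dt` on `(0, 1)`. -/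
noncomputable def powMeas (W : ℝ) : Measure ℝ :=
  (volume.restrict (Ioo (0 : ℝ) 1)).withDensity (fun t => ENNReal.ofReal (t ^ (W - 1)))

lemma ae_powMeas_mem_Ioo (W : ℝ) : ∀ᵐ t ∂powMeas W, t ∈ Ioo (0 : ℝ) 1 :=
  (withDensity_absolutelyContinuous _ _).ae_le (ae_restrict_mem measurableSet_Ioo)

lemma lintegral_powMeas_add_rpow_neg_le {W κ d : ℝ} (hW : 0 < W) (hκ : 0 < κ) (hd : 0 < d) :
    ∫⁻ t, ENNReal.ofReal ((t + d) ^ (-(W + κ))) ∂powMeas W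
      ≤ ENNReal.ofReal ((1 / W + 1 / κ) * d ^ (-κ)) := by
  calc _ ≤ ∫⁻ t in Ioo 0 1, ENNReal.ofReal (t ^ (W - 1)) *
          ENNReal.ofReal ((t + d) ^ (-(W + κ))) :=
        lintegral_withDensity_le_lintegral_mul _ (by fun_prop) _
    _ ≤ ∫⁻ t in Ioi 0, ENNReal.ofReal (t ^ (W - 1)) * ENNReal.ofReal ((t + d) ^ (-(W + κ))) :=
        lintegral_mono_set Ioo_subset_Ioi_self
    _ ≤ _ := by
        simpa only [mul_one, one_rpow, add_comm d] using
          lintegral_Ioi_zero_rpow_mul_add_mul_rpow_neg_le hW hκ hd one_pos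

lemma eLpNorm_add_rpow_neg_le {W a : ℝ} (hW : 0 < W) (ha : 0 < a) {p : ℝ≥0∞} (hp : p ≠ 0) :
    ∃ C : ℝ, 0 < C ∧ ∀ d : ℝ, 0 < d →
      eLpNorm (fun t : ℝ => (t + d) ^ (-(a + W / p.toReal))) p (powMeas W)
        ≤ ENNReal.ofReal (C * d ^ (-a)) := by
  rcases eq_or_ne p ∞ with rfl | htop
  · refine ⟨1, one_pos, fun d hd => ?_⟩
    rw [ENNReal.toReal_top, div_zero, add_zero, one_mul]
    exact eLpNorm_top_add_rpow_neg_le ((ae_powMeas_mem_Ioo W).mono fun t ht => ht.1) ha.le hd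
  have hr : 0 < p.toReal := ENNReal.toReal_pos hp htop
  set r := p.toReal with hrdef
  set K : ℝ := 1 / W + 1 / (a * r)
  have hK : 0 < K := by positivity
  refine ⟨K ^ (1 / r), by positivity, fun d hd => ?_⟩
  have hpow : ∫⁻ t, ‖(t + d) ^ (-(a + W / r))‖ₑ ^ r ∂powMeas W
      = ∫⁻ t, ENNReal.ofReal ((t + d) ^ (-(W + a * r))) ∂powMeas W := by
    refine lintegral_congr_ae ((ae_powMeas_mem_Ioo W).mono fun t ht => ?_)
    have htd : 0 < t + d := add_pos ht.1 hd
    have hexp : -(a + W / r) * r = -(W + a * r) := by field_simp; ring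
    simp only
    rw [Real.enorm_of_nonneg (by positivity), ENNReal.ofReal_rpow_of_nonneg (by positivity) hr.le,
      ← rpow_mul htd.le, hexp]
  rw [eLpNorm_eq_lintegral_rpow_enorm_toReal hp htop, ← hrdef, hpow]
  calc _ ≤ ENNReal.ofReal (K * d ^ (-(a * r))) ^ (1 / r) := by
        gcongr
        exact lintegral_powMeas_add_rpow_neg_le hW (by positivity) hd
    _ = _ := by
        rw [ENNReal.ofReal_rpow_of_nonneg (by positivity) (by positivity),
          mul_rpow hK.le (by positivity), ← rpow_mul hd.le]
        congr 3
        field_simp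

lemma sq_le_of_abs_sub_le {x a b r : ℝ} (hxa : |x - a| ≤ r) (hab : |a - b| ≤ r) :
    x ^ 2 ≤ 4 * (r ^ 2 + a * b) := by
  have hxa' := sq_le_sq.2 (hxa.trans (le_abs_self r))
  have hab' := sq_le_sq.2 (hab.trans (le_abs_self r))
  have hx : x ^ 2 ≤ 2 * a ^ 2 + 2 * (x - a) ^ 2 := by nlinarith [sq_nonneg (x - 2 * a)]
  have ha : a ^ 2 ≤ 2 * (a * b) + (a - b) ^ 2 := by nlinarith [sq_nonneg b]
  linarith

lemma abs_sin_half_sub_le (x y : ℝ) : |sin (x / 2) - sin (y / 2)| ≤ |x - y| := by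
  refine (abs_sin_sub_sin_le _ _).trans ?_
  rw [← sub_div, abs_div, abs_two]
  exact half_le_self (abs_nonneg _)

lemma abs_cos_half_sub_le (x y : ℝ) : |cos (x / 2) - cos (y / 2)| ≤ |x - y| := by
  refine (abs_cos_sub_cos_le _ _).trans ?_
  rw [← sub_div, abs_div, abs_two]
  exact half_le_self (abs_nonneg _)

lemma sin_rpow_mul_cos_rpow_le_ballWeight {α β θ φ x : ℝ} (hα : -(1 / 2) ≤ α)
    (hβ : -(1 / 2) ≤ β) (hθ : θ ∈ Icc (0 : ℝ) π) (hφ : φ ∈ Icc (0 : ℝ) π)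
    (hx : x ∈ ballI θ |θ - φ|) :
    sin (x / 2) ^ (2 * α + 1) * cos (x / 2) ^ (2 * β + 1)
      ≤ 4 ^ (α + β + 1) * ballWeight α β θ φ := by
  have hxθ : |x - θ| ≤ |θ - φ| := abs_le.2 ⟨by linarith [hx.1.1], by linarith [hx.1.2]⟩
  have hsin := sq_le_of_abs_sub_le ((abs_sin_half_sub_le x θ).trans hxθ) (abs_sin_half_sub_le θ φ)
  have hcos := sq_le_of_abs_sub_le ((abs_cos_half_sub_le x θ).trans hxθ) (abs_cos_half_sub_le θ φ)
  rw [sq_abs] at hsin hcos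
  have hX := mul_nonneg (sin_half_mem_Icc hθ).1 (sin_half_mem_Icc hφ).1
  have hY := mul_nonneg (cos_half_mem_Icc hθ).1 (cos_half_mem_Icc hφ).1
  have hs := (sin_half_mem_Icc hx.2).1
  have hc := (cos_half_mem_Icc hx.2).1
  have hexp (ν : ℝ) : 2 * ν + 1 = 2 * (ν + 1 / 2) := by ring
  rw [hexp α, hexp β, rpow_mul hs, rpow_mul hc, rpow_two, rpow_two]
  calc _ ≤ (4 * ((θ - φ) ^ 2 + sin (θ / 2) * sin (φ / 2))) ^ (α + 1 / 2) *
          (4 * ((θ - φ) ^ 2 + cos (θ / 2) * cos (φ / 2))) ^ (β + 1 / 2) :=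
        mul_le_mul (rpow_le_rpow (sq_nonneg _) hsin (by linarith))
          (rpow_le_rpow (sq_nonneg _) hcos (by linarith)) (by positivity) (by positivity)
    _ = _ := by
        have hsum : α + β + 1 = (α + 1 / 2) + (β + 1 / 2) := by ring
        rw [mul_rpow (by norm_num) (by positivity), mul_rpow (by norm_num) (by positivity), hsum,
          rpow_add (by norm_num) (α + 1 / 2), ballWeight]
        ring

lemma measurableSet_ballI (θ r : ℝ) : MeasurableSet (ballI θ r) :=
  measurableSet_Ioo.inter measurableSet_Icc

lemma muab_ballI_eq (α β θ r : ℝ) :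
    muab α β (ballI θ r) = ∫⁻ x in ballI θ r,
      ENNReal.ofReal (sin (x / 2) ^ (2 * α + 1) * cos (x / 2) ^ (2 * β + 1)) := by
  have hsub : ballI θ r ⊆ Icc 0 π := inter_subset_right
  rw [muab, withDensity_apply _ (measurableSet_ballI θ r),
    Measure.restrict_restrict_of_subset hsub]

lemma muab_ballI_le {α β θ φ : ℝ} (hα : -(1 / 2) ≤ α) (hβ : -(1 / 2) ≤ β)
    (hθ : θ ∈ Icc (0 : ℝ) π) (hφ : φ ∈ Icc (0 : ℝ) π) (hne : θ ≠ φ) :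
    muab α β (ballI θ |θ - φ|)
      ≤ ENNReal.ofReal (2 * 4 ^ (α + β + 1) * (|θ - φ| * ballWeight α β θ φ)) := by
  have hw := ballWeight_pos α β hθ hφ hne
  rw [muab_ballI_eq]
  calc _ ≤ ∫⁻ _ in ballI θ |θ - φ|, ENNReal.ofReal (4 ^ (α + β + 1) * ballWeight α β θ φ) :=
        setLIntegral_mono' (measurableSet_ballI θ _) fun x hx =>
          ENNReal.ofReal_le_ofReal (sin_rpow_mul_cos_rpow_le_ballWeight hα hβ hθ hφ hx)
    _ ≤ ENNReal.ofReal (4 ^ (α + β + 1) * ballWeight α β θ φ) *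
          volume (Ioo (θ - |θ - φ|) (θ + |θ - φ|)) := by
        rw [setLIntegral_const]
        gcongr
        exact inter_subset_left
    _ = _ := by
        rw [Real.volume_Ioo, ← ENNReal.ofReal_mul (by positivity)]
        ring_nf

lemma muab_ballI_pos (α β : ℝ) {θ r : ℝ} (hθ : θ ∈ Icc (0 : ℝ) π) (hr : 0 < r) :
    0 < muab α β (ballI θ r) := by
  have hsub : Ioo (max (θ - r) 0) (min (θ + r) π) ⊆ Function.support (fun x =>
      ENNReal.ofReal (sin (x / 2) ^ (2 * α + 1) * cos (x / 2) ^ (2 * β + 1))) ∩ ballI θ r := by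
    rintro x ⟨hlo, hhi⟩
    obtain ⟨hlo, hx₀⟩ := max_lt_iff.1 hlo
    obtain ⟨hhi, hxπ⟩ := lt_min_iff.1 hhi
    have hs : 0 < sin (x / 2) := sin_pos_of_pos_of_lt_pi (by linarith) (by linarith)
    have hc : 0 < cos (x / 2) := cos_pos_of_mem_Ioo ⟨by linarith, by linarith⟩
    exact ⟨(ENNReal.ofReal_pos.2 (by positivity)).ne', ⟨hlo, hhi⟩, hx₀.le, hxπ.le⟩
  have hlt : max (θ - r) 0 < min (θ + r) π :=
    max_lt (lt_min (by linarith) (by linarith [hθ.2])) (lt_min (by linarith [hθ.1]) pi_pos)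
  rw [muab_ballI_eq, setLIntegral_pos_iff (by fun_prop)]
  exact ((isOpen_Ioo.measure_pos volume (nonempty_Ioo.2 hlt))).trans_le (measure_mono hsub)

lemma rpow_div_ballWeight_le {α β : ℝ} (hα : -(1 / 2) ≤ α) (hβ : -(1 / 2) ≤ β) {θ φ : ℝ}
    (hθ : θ ∈ Icc (0 : ℝ) π) (hφ : φ ∈ Icc (0 : ℝ) π) (hne : θ ≠ φ) (s : ℝ) :
    |θ - φ| ^ (-(1 + s)) / ballWeight α β θ φ ≤
      2 * 4 ^ (α + β + 1) * |θ - φ| ^ (-s) / (muab α β (ballI θ |θ - φ|)).toReal := by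
  have hD : 0 < |θ - φ| := abs_pos.2 (sub_ne_zero.2 hne)
  have hw := ballWeight_pos α β hθ hφ hne
  have hμ := muab_ballI_le hα hβ hθ hφ hne
  have hμ_pos : 0 < (muab α β (ballI θ |θ - φ|)).toReal :=
    ENNReal.toReal_pos (muab_ballI_pos α β hθ hD).ne' (ne_top_of_le_ne_top ENNReal.ofReal_ne_top hμ)
  have hμ_le := ENNReal.toReal_le_of_le_ofReal (by positivity) hμ
  calc _ = 2 * 4 ^ (α + β + 1) * |θ - φ| ^ (-s) /
          (2 * 4 ^ (α + β + 1) * (|θ - φ| * ballWeight α β θ φ)) := by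
        rw [neg_add, rpow_add hD, rpow_neg_one]
        field_simp
    _ ≤ _ := by gcongr

theorem finbridge_high_general {α β W s : ℝ} (hα : -(1 / 2) ≤ α) (hβ : -(1 / 2) ≤ β) (hW : 0 < W)
    (hs : -1 < s) {p : ℝ≥0∞} (hp : p ≠ 0) :
    ∃ C : ℝ, 0 < C ∧ ∀ θ ∈ Icc (0 : ℝ) π, ∀ φ ∈ Icc (0 : ℝ) π, θ ≠ φ →
      eLpNorm
          (fun t : ℝ => 1 + upsilon α β (α + β + 3 / 2 + W / (2 * p.toReal) + s / 2) t θ φ) p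
          (powMeas W)
        ≤ ENNReal.ofReal
            (C * |θ - φ| ^ (-s) / (muab α β (ballI θ |θ - φ|)).toReal) := by
  obtain ⟨κ, hκ⟩ : ∃ κ, 2 * κ = 1 + s + W / p.toReal := ⟨_, mul_div_cancel₀ _ two_ne_zero⟩
  have hκ_pos : 0 < κ := by linarith [show 0 ≤ W / p.toReal by positivity]
  have hexp : α + β + 3 / 2 + W / (2 * p.toReal) + s / 2 = α + β + 1 + κ := by
    rw [mul_comm 2, ← div_div]
    linarith
  obtain ⟨C₁, hC₁, hupsilon⟩ := enorm_one_add_upsilon_le hα hβ hκ_pos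
  obtain ⟨C₂, hC₂, hnorm⟩ := eLpNorm_add_rpow_neg_le hW (show 0 < 1 + s by linarith) hp
  refine ⟨C₁ * C₂ * (2 * 4 ^ (α + β + 1)), by positivity, fun θ hθ φ hφ hne => ?_⟩
  have hw := ballWeight_pos α β hθ hφ hne
  set D := |θ - φ|
  have hD : 0 < D := abs_pos.2 (sub_ne_zero.2 hne)
  calc _ ≤ eLpNorm ((C₁ / ballWeight α β θ φ) •
          fun t : ℝ => (t + D) ^ (-(1 + s + W / p.toReal))) p (powMeas W) := by
        refine eLpNorm_mono_enorm_ae ((ae_powMeas_mem_Ioo W).mono fun t ht => ?_)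
        rw [hexp, ← hκ, Pi.smul_apply, smul_eq_mul]
        exact (hupsilon θ hθ φ hφ hne t ht).trans (Real.ofReal_le_enorm _)
    _ ≤ ENNReal.ofReal (C₁ / ballWeight α β θ φ) * ENNReal.ofReal (C₂ * D ^ (-(1 + s))) := by
        rw [eLpNorm_const_smul, Real.enorm_of_nonneg (by positivity)]
        gcongr
        exact hnorm D hD
    _ = ENNReal.ofReal (C₁ * C₂ * (D ^ (-(1 + s)) / ballWeight α β θ φ)) := by
        rw [← ENNReal.ofReal_mul (by positivity)]
        ring_nf
    _ ≤ _ := by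
        refine ENNReal.ofReal_le_ofReal ?_
        rw [mul_assoc (C₁ * C₂), mul_div_assoc (C₁ * C₂)]
        exact mul_le_mul_of_nonneg_left (rpow_div_ballWeight_le hα hβ hθ hφ hne s) (by positivity)

theorem finbridge_high (α β : ℝ) (hα : -(1/2) ≤ α) (hβ : -(1/2) ≤ β)
    (W s : ℝ) (hW : 1 ≤ W) (hs : 0 ≤ s) (p : ℝ≥0∞) (hp : 1 ≤ p) :
    ∃ C : ℝ, 0 < C ∧ ∀ θ ∈ Icc (0 : ℝ) π, ∀ φ ∈ Icc (0 : ℝ) π, θ ≠ φ →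
      eLpNorm (fun t : ℝ =>
          1 + ∫ v, (∫ u,
                (t ^ 2 + qf θ φ u v) ^ (-(α + β + 3/2 + W / (2 * p.toReal) + s / 2))
              ∂(PiMeas α)) ∂(PiMeas β)) p
          ((volume.restrict (Ioo (0 : ℝ) 1)).withDensity
            (fun t => ENNReal.ofReal (t ^ (W - 1))))
        ≤ ENNReal.ofReal
            (C * |θ - φ| ^ (-s) / (muab α β (ballI θ |θ - φ|)).toReal) :=
  finbridge_high_general hα hβ (zero_lt_one.trans_le hW) (neg_one_lt_zero.trans_le hs)
    (zero_lt_one.trans_le hp).ne'
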